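/- Let B be a finite set (of bins), δ a real with 0 < δ < 1, ℓ : B → ℝ a function with 0 ≤ ℓ(b) < 1/2 for all b ∈ B, and k : B → ℕ a function with Σ_{b∈B} k(b) = N. Let m = |{b ∈ B : ℓ(b) ≥ δ}|. Then |{b ∈ B : ℓ(b) + k(b)·(1−δ) ≥ 1}| ≤ (N + m)/2. -/

import Mathlib

/-! Give each bin one unit of credit per item it receives, and one extra unit if a single item
would already cover it. A bin that starts below capacity and ends up covered received at least two
items, or one item that sufficed; either way it holds at least two units of credit. -/

section BinCovering

variable {R : Type*} [AddMonoid R] [Preorder R] [DecidableLE R] {a c : R}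

theorem two_le_add_ite_of_le_add_nsmul {x : R} {n : ℕ} (hx : x < c) (hn : c ≤ x + n • a) :
    2 ≤ n + if c ≤ x + a then 1 else 0 := by
  match n with
  | 0 =>
    have hcx : c ≤ x := by simpa only [zero_nsmul, add_zero] using hn
    exact absurd hcx hx.not_ge
  | 1 =>
    have hone : c ≤ x + a := by simpa only [one_nsmul] using hn
    rw [if_pos hone]
  | n + 2 => omega

theorem two_mul_card_covered_le_sum_add_card {B : Type*} (s : Finset B) {ℓ : B → R}
    (hℓ : ∀ b ∈ s, ℓ b < c) (k : B → ℕ) :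
    2 * (s.filter fun b => c ≤ ℓ b + k b • a).card
      ≤ ∑ b ∈ s, k b + (s.filter fun b => c ≤ ℓ b + a).card := by
  let credit (b : B) : ℕ := k b + if c ≤ ℓ b + a then 1 else 0
  have two_le_credit : ∀ b ∈ s.filter fun b => c ≤ ℓ b + k b • a, 2 ≤ credit b := fun b hb =>
    have ⟨hbs, hcov⟩ := Finset.mem_filter.mp hb
    two_le_add_ite_of_le_add_nsmul (hℓ b hbs) hcov
  calc 2 * (s.filter fun b => c ≤ ℓ b + k b • a).card
      = (s.filter fun b => c ≤ ℓ b + k b • a).card • 2 := by rw [smul_eq_mul, mul_comm]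
    _ ≤ ∑ b ∈ s with c ≤ ℓ b + k b • a, credit b := Finset.card_nsmul_le_sum _ _ _ two_le_credit
    _ ≤ ∑ b ∈ s, credit b := Finset.sum_le_sum_of_subset (Finset.filter_subset _ _)
    _ = ∑ b ∈ s, k b + (s.filter fun b => c ≤ ℓ b + a).card := by
      rw [Finset.sum_add_distrib, Finset.card_filter]

end BinCovering

theorem stmt5_general {K B : Type*} [Field K] [LinearOrder K] [IsStrictOrderedRing K]
    (s : Finset B) (δ : K) {ℓ : B → K} (hℓ : ∀ b ∈ s, ℓ b < 1) (k : B → ℕ) :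
    ((s.filter fun b => 1 ≤ ℓ b + (k b : K) * (1 - δ)).card : K)
      ≤ ((∑ b ∈ s, k b : ℕ) + (s.filter fun b => δ ≤ ℓ b).card) / 2 := by
  have one_le_iff (x : K) : 1 ≤ x + (1 - δ) ↔ δ ≤ x := by
    rw [← sub_le_iff_le_add, sub_sub_cancel]
  have two_mul_card_le := two_mul_card_covered_le_sum_add_card (a := 1 - δ) s hℓ k
  simp only [nsmul_eq_mul, one_le_iff] at two_mul_card_le
  rw [le_div_iff₀' two_pos]
  exact_mod_cast two_mul_card_le

theorem stmt5 {B : Type*} [Fintype B] [DecidableEq B] (δ : ℝ) (hδ0 : 0 < δ) (hδ1 : δ < 1)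
    (ℓ : B → ℝ) (hℓ : ∀ b, 0 ≤ ℓ b ∧ ℓ b < 1 / 2)
    (k : B → ℕ) (N : ℕ) (hk : ∑ b, k b = N)
    (m : ℕ) (hm : m = (Finset.univ.filter (fun b => δ ≤ ℓ b)).card) :
    ((Finset.univ.filter (fun b => 1 ≤ ℓ b + (k b : ℝ) * (1 - δ))).card : ℝ)
      ≤ ((N : ℝ) + m) / 2 := by
  subst hk hm
  exact stmt5_general Finset.univ δ (fun b _ => (hℓ b).2.trans one_half_lt_one) k
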